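/- Let (Ω, 𝒜, μ) be a σ-finite measure space, 1 ≤ p < ∞, and let M_n : L^p(μ) → L⁰(μ) be a sequence of positive continuous linear maps (positivity: M_n(f) ≥ 0 a.e. whenever f ≥ 0 a.e.; continuity: f_k → f in L^p implies M_n(f_k) → M_n(f) in measure) such that for every f ∈ L^p(μ) and every ε > 0 there exists a measurable set E ⊆ Ω with μ(Ω∖E) ≤ ε and sup_n ‖(M_n(f))·1_E‖_∞ < ∞. Then the set { f ∈ L^p(μ) : (M_n(f))_{n≥1} converges almost uniformly } is closed in L^p(μ). -/

import Mathlib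

open MeasureTheory Filter Set ENNReal Topology

variable {Ω : Type*} [MeasurableSpace Ω]

/-- Almost uniform convergence of a net `F` to `f`. -/
def AuTendsto {ι : Type*} (μ : Measure Ω) (l : Filter ι) (F : ι → Ω →ₘ[μ] ℝ)
    (f : Ω →ₘ[μ] ℝ) : Prop :=
  ∀ ε : ℝ, 0 < ε → ∃ E : Set Ω, MeasurableSet E ∧ μ Eᶜ ≤ ENNReal.ofReal ε ∧
    Tendsto (fun i => eLpNorm (E.indicator (⇑(F i - f))) ⊤ μ) l (𝓝 0)

/-!
The core is the Banach principle. The sets `{f | μ {x | N < sup_i |M_i f x|} ≤ ε}` are closed and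
cover the domain, so one of them has interior by Baire's theorem; translating an interior point to
the origin and dividing by a large integer shows that `f ↦ sup_i |M_i f|` is continuous in measure
at `0`. Hence a limit `f` of points of convergence is approximated by such points `u` with
`sup_i |M_i (f - u)|` uniformly small off a small set, which makes `(M_i f)` almost uniformly
Cauchy.
-/

/-- `P` holds on measurable sets with complement of arbitrarily small measure. Almost uniform
convergence and almost uniform boundedness are of this form. -/
def AlmostUniformly (μ : Measure Ω) (P : Set Ω → Prop) : Prop :=
  ∀ ε : ℝ, 0 < ε → ∃ A : Set Ω, MeasurableSet A ∧ μ Aᶜ ≤ ENNReal.ofReal ε ∧ P A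

namespace AlmostUniformly

variable {μ : Measure Ω}

theorem exists_measure_compl_le {P : Set Ω → Prop} (h : AlmostUniformly μ P) {ε : ℝ≥0∞}
    (hε : ε ≠ 0) : ∃ A, MeasurableSet A ∧ μ Aᶜ ≤ ε ∧ P A := by
  obtain ⟨r, hr, hrε⟩ := ENNReal.lt_iff_exists_nnreal_btwn.1 hε.bot_lt
  obtain ⟨A, hA, hμA, hPA⟩ := h r (NNReal.coe_pos.2 (ENNReal.coe_pos.1 hr))
  exact ⟨A, hA, hμA.trans (ENNReal.ofReal_coe_nnreal.trans_le hrε.le), hPA⟩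

theorem mono {P Q : Set Ω → Prop} (h : AlmostUniformly μ P) (hPQ : ∀ A, P A → Q A) :
    AlmostUniformly μ Q := fun ε hε =>
  let ⟨A, hA, hμA, hPA⟩ := h ε hε
  ⟨A, hA, hμA, hPQ A hPA⟩

theorem forall_of_antitone {κ : Type*} [Countable κ] {P : κ → Set Ω → Prop}
    (hP : ∀ k, Antitone (P k)) (h : ∀ k, AlmostUniformly μ (P k)) :
    AlmostUniformly μ fun A => ∀ k, P k A := by
  intro ε hε
  obtain ⟨η, hη, hηε⟩ :=
    ENNReal.exists_pos_sum_of_countable' (ENNReal.ofReal_pos.2 hε).ne' κ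
  choose A hA hμA hPA using fun k => (h k).exists_measure_compl_le (hη k).ne'
  refine ⟨⋂ k, A k, .iInter hA, ?_, fun k => hP k (iInter_subset A k) (hPA k)⟩
  calc μ (⋂ k, A k)ᶜ = μ (⋃ k, (A k)ᶜ) := by rw [compl_iInter]
    _ ≤ ∑' k, μ (A k)ᶜ := measure_iUnion_le _
    _ ≤ ∑' k, η k := ENNReal.tsum_le_tsum hμA
    _ ≤ ENNReal.ofReal ε := hηε.le

theorem ae {p : Ω → Prop} (h : AlmostUniformly μ fun A => ∀ᵐ x ∂μ, x ∈ A → p x) :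
    ∀ᵐ x ∂μ, p x := by
  by_contra hp
  obtain ⟨r, hr, hrp⟩ := exists_between (pos_iff_ne_zero.2 (mt ae_iff.2 hp))
  obtain ⟨A, -, hμA, hA⟩ := h.exists_measure_compl_le hr.ne'
  have hle : μ {x | ¬ p x} ≤ μ Aᶜ := measure_mono_ae <| hA.mono fun x hx => mt hx
  exact (hle.trans hμA).not_gt hrp

end AlmostUniformly

section EssSupNormOn

variable {μ : Measure Ω} {E : Type*} [NormedAddCommGroup E]

/-- The essential supremum norm `‖f · 1_A‖_∞`. -/
noncomputable def essSupNormOn (A : Set Ω) (f : Ω →ₘ[μ] E) : ℝ≥0∞ :=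
  eLpNorm (A.indicator ⇑f) ⊤ μ

theorem ae_enorm_le_essSupNormOn (A : Set Ω) (f : Ω →ₘ[μ] E) :
    ∀ᵐ x ∂μ, x ∈ A → ‖f x‖ₑ ≤ essSupNormOn A f := by
  filter_upwards [ae_le_eLpNormEssSup (f := A.indicator ⇑f) (μ := μ)] with x hx hxA
  rwa [indicator_of_mem hxA] at hx

theorem essSupNormOn_le_iff {A : Set Ω} {f : Ω →ₘ[μ] E} {c : ℝ≥0∞} :
    essSupNormOn A f ≤ c ↔ ∀ᵐ x ∂μ, x ∈ A → ‖f x‖ₑ ≤ c := by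
  refine ⟨fun h => (ae_enorm_le_essSupNormOn A f).mono fun x hx hxA => (hx hxA).trans h,
    fun h => essSup_le_of_ae_le c (h.mono fun x hx => ?_)⟩
  simp only [enorm_indicator_eq_indicator_enorm]
  exact indicator_apply_le' hx fun _ => zero_le

theorem essSupNormOn_mono_set (f : Ω →ₘ[μ] E) : Monotone fun A => essSupNormOn A f :=
  fun _ B hAB => essSupNormOn_le_iff.2 <|
    (ae_enorm_le_essSupNormOn B f).mono fun _ hx hxA => hx (hAB hxA)

theorem essSupNormOn_add_le (A : Set Ω) (f g : Ω →ₘ[μ] E) :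
    essSupNormOn A (f + g) ≤ essSupNormOn A f + essSupNormOn A g := by
  rw [essSupNormOn_le_iff]
  filter_upwards [ae_enorm_le_essSupNormOn A f, ae_enorm_le_essSupNormOn A g,
    AEEqFun.coeFn_add f g] with x hf hg hfg hxA
  rw [hfg]
  exact (enorm_add_le _ _).trans (add_le_add (hf hxA) (hg hxA))

theorem essSupNormOn_sub_le (A : Set Ω) (f g : Ω →ₘ[μ] E) :
    essSupNormOn A (f - g) ≤ essSupNormOn A f + essSupNormOn A g := by
  rw [essSupNormOn_le_iff]
  filter_upwards [ae_enorm_le_essSupNormOn A f, ae_enorm_le_essSupNormOn A g,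
    AEEqFun.coeFn_sub f g] with x hf hg hfg hxA
  rw [hfg]
  exact enorm_sub_le.trans (add_le_add (hf hxA) (hg hxA))

theorem essSupNormOn_sub_le_of_ae_tendsto {ι : Type*} [Countable ι] {l : Filter ι} [l.NeBot]
    {F : ι → Ω →ₘ[μ] E} {f g : Ω →ₘ[μ] E} (hF : ∀ᵐ x ∂μ, Tendsto (fun i => F i x) l (𝓝 (g x)))
    {A : Set Ω} {c : ℝ≥0∞} (hc : ∀ᶠ i in l, essSupNormOn A (f - F i) ≤ c) :
    essSupNormOn A (f - g) ≤ c := by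
  rw [essSupNormOn_le_iff]
  filter_upwards [hF, ae_all_iff.2 fun i => ae_enorm_le_essSupNormOn A (f - F i),
    ae_all_iff.2 fun i => AEEqFun.coeFn_sub f (F i), AEEqFun.coeFn_sub f g]
    with x hlim hle hsub hsub_lim hxA
  rw [hsub_lim]
  refine le_of_tendsto (hlim.const_sub (f x)).enorm (hc.mono fun i hi => ?_)
  simpa only [hsub i, Pi.sub_apply] using (hle i hxA).trans hi

end EssSupNormOn

section AuCauchy

variable {μ : Measure Ω} {E : Type*} [NormedAddCommGroup E] {ι : Type*} {l : Filter ι}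

/-- Almost uniformly Cauchy families: the intrinsic counterpart of `AuTendsto`, without reference
to a limit. -/
def AuCauchy (μ : Measure Ω) (l : Filter ι) (F : ι → Ω →ₘ[μ] E) : Prop :=
  AlmostUniformly μ fun A =>
    Tendsto (fun q : ι × ι => essSupNormOn A (F q.1 - F q.2)) (l ×ˢ l) (𝓝 0)

theorem auTendsto_iff_almostUniformly {F : ι → Ω →ₘ[μ] ℝ} {f : Ω →ₘ[μ] ℝ} :
    AuTendsto μ l F f ↔
      AlmostUniformly μ fun A => Tendsto (fun i => essSupNormOn A (F i - f)) l (𝓝 0) :=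
  Iff.rfl

theorem AuTendsto.auCauchy {F : ι → Ω →ₘ[μ] ℝ} {f : Ω →ₘ[μ] ℝ} (h : AuTendsto μ l F f) :
    AuCauchy μ l F := by
  refine (auTendsto_iff_almostUniformly.1 h).mono fun A hA => ?_
  have hsum : Tendsto (fun q : ι × ι => essSupNormOn A (F q.1 - f) + essSupNormOn A (F q.2 - f))
      (l ×ˢ l) (𝓝 0) := by
    simpa only [add_zero, Function.comp_apply] using (hA.comp tendsto_fst).add (hA.comp tendsto_snd)
  refine tendsto_of_tendsto_of_tendsto_of_le_of_le tendsto_const_nhds hsum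
    (fun _ => zero_le) fun q => ?_
  simpa only [sub_sub_sub_cancel_right] using essSupNormOn_sub_le A (F q.1 - f) (F q.2 - f)

theorem AuCauchy.ae_cauchy_map [Countable ι] [l.NeBot] {F : ι → Ω →ₘ[μ] E}
    (h : AuCauchy μ l F) : ∀ᵐ x ∂μ, Cauchy (map (fun i => F i x) l) := by
  refine (h.mono fun A hA => ?_).ae
  filter_upwards [ae_all_iff.2 fun q : ι × ι => ae_enorm_le_essSupNormOn A (F q.1 - F q.2),
    ae_all_iff.2 fun q : ι × ι => AEEqFun.coeFn_sub (F q.1) (F q.2)] with x hle hsub hxA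
  rw [cauchy_map_iff', uniformity_basis_edist_le.tendsto_right_iff]
  intro ε hε
  filter_upwards [ENNReal.tendsto_nhds_zero.1 hA ε hε] with q hq
  simpa only [mem_ofPred_eq, edist_eq_enorm_sub, hsub q, Pi.sub_apply] using (hle q hxA).trans hq

theorem AuCauchy.exists_auTendsto [Countable ι] [l.NeBot] [l.IsCountablyGenerated]
    {F : ι → Ω →ₘ[μ] ℝ} (h : AuCauchy μ l F) : ∃ f, AuTendsto μ l F f := by
  have : Nonempty ι := l.nonempty_of_neBot
  obtain ⟨g, hg, hFg⟩ := measurable_limit_of_tendsto_metrizable_ae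
    (fun i => (F i).measurable.aemeasurable)
    (h.ae_cauchy_map.mono fun x hx => CompleteSpace.complete hx)
  let f : Ω →ₘ[μ] ℝ := AEEqFun.mk g hg.aestronglyMeasurable
  have hF : ∀ᵐ x ∂μ, Tendsto (fun i => F i x) l (𝓝 (f x)) := by
    filter_upwards [hFg, AEEqFun.coeFn_mk g hg.aestronglyMeasurable] with x hx hfx
    rwa [hfx]
  refine ⟨f, auTendsto_iff_almostUniformly.2 <| h.mono fun A hA => ?_⟩
  refine ENNReal.tendsto_nhds_zero.2 fun ε hε => ?_
  filter_upwards [(ENNReal.tendsto_nhds_zero.1 hA ε hε).curry] with i hi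
  exact essSupNormOn_sub_le_of_ae_tendsto hF hi

theorem auCauchy_of_forall_ne_zero {F : ι → Ω →ₘ[μ] E}
    (h : ∀ δ : ℝ≥0∞, δ ≠ 0 → AlmostUniformly μ fun A =>
      ∀ᶠ q : ι × ι in l ×ˢ l, essSupNormOn A (F q.1 - F q.2) ≤ δ) :
    AuCauchy μ l F := by
  have hnat : AlmostUniformly μ fun A => ∀ k : ℕ,
      ∀ᶠ q : ι × ι in l ×ˢ l, essSupNormOn A (F q.1 - F q.2) ≤ (k : ℝ≥0∞)⁻¹ :=
    .forall_of_antitone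
      (fun k A B hAB hB => hB.mono fun q hq => (essSupNormOn_mono_set _ hAB).trans hq)
      fun k => h _ (ENNReal.inv_ne_zero.2 (ENNReal.natCast_ne_top k))
  refine hnat.mono fun A hA => ENNReal.tendsto_nhds_zero.2 fun ε hε => ?_
  obtain ⟨k, hk⟩ := ENNReal.exists_inv_nat_lt hε.ne'
  exact (hA k).mono fun q hq => hq.trans hk.le

end AuCauchy

section MaximalFunction

variable {μ : Measure Ω} {E : Type*} [NormedAddCommGroup E] {ι : Type*}

/-- The maximal function `sup_i ‖F_i‖` of a family, with values in `[0, ∞]`. -/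
noncomputable def maximalFunction {α : Type*} (F : ι → α → E) (x : α) : ℝ≥0∞ := ⨆ i, ‖F i x‖ₑ

theorem measurable_maximalFunction [Countable ι] (F : ι → Ω →ₘ[μ] E) :
    Measurable (maximalFunction fun i => ⇑(F i)) :=
  .iSup fun i => (F i).stronglyMeasurable.enorm

theorem essSupNormOn_le_of_maximalFunction_le {F : ι → Ω →ₘ[μ] E} {A : Set Ω} {c : ℝ≥0∞}
    (h : ∀ x ∈ A, maximalFunction (fun i => ⇑(F i)) x ≤ c) (i : ι) :
    essSupNormOn A (F i) ≤ c :=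
  essSupNormOn_le_iff.2 <| .of_forall fun x hxA =>
    (le_iSup (fun i => ‖F i x‖ₑ) i).trans (h x hxA)

theorem AuCauchy.of_forall_exists_measure_lt_maximalFunction_sub_le [Countable ι] {l : Filter ι}
    {F : ι → Ω →ₘ[μ] E}
    (h : ∀ ε : ℝ≥0∞, ε ≠ 0 → ∀ δ : ℝ≥0∞, δ ≠ 0 → ∃ G : ι → Ω →ₘ[μ] E, AuCauchy μ l G ∧
      μ {x | δ < maximalFunction (fun i => ⇑(F i - G i)) x} ≤ ε) :
    AuCauchy μ l F := by
  refine auCauchy_of_forall_ne_zero fun δ hδ ε hε => ?_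
  have hε2 : ENNReal.ofReal ε / 2 ≠ 0 := (ENNReal.half_pos (ENNReal.ofReal_pos.2 hε).ne').ne'
  have hδ3 : δ / 3 ≠ 0 := ENNReal.div_ne_zero.2 ⟨hδ, ENNReal.ofNat_ne_top⟩
  obtain ⟨G, hG, hFG⟩ := h _ hε2 _ hδ3
  obtain ⟨A, hA, hμA, hGA⟩ := hG.exists_measure_compl_le hε2
  set B := {x | δ / 3 < maximalFunction (fun i => ⇑(F i - G i)) x}
  have hB : MeasurableSet B := measurableSet_lt measurable_const (measurable_maximalFunction _)
  refine ⟨A ∩ Bᶜ, hA.inter hB.compl, ?_, ?_⟩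
  · rw [compl_inter, compl_compl, ← ENNReal.add_halves (ENNReal.ofReal ε)]
    exact (measure_union_le _ _).trans (add_le_add hμA hFG)
  filter_upwards [ENNReal.tendsto_nhds_zero.1 hGA _ (pos_iff_ne_zero.2 hδ3)] with ⟨i, j⟩ hij
  have hdiff (k : ι) : essSupNormOn (A ∩ Bᶜ) (F k - G k) ≤ δ / 3 :=
    essSupNormOn_le_of_maximalFunction_le (F := fun k => F k - G k) (fun x hx => not_lt.1 hx.2) k
  calc essSupNormOn (A ∩ Bᶜ) (F i - F j)
      = essSupNormOn (A ∩ Bᶜ) ((F i - G i) - (F j - G j) + (G i - G j)) := by congr 1; abel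
    _ ≤ essSupNormOn (A ∩ Bᶜ) (F i - G i) + essSupNormOn (A ∩ Bᶜ) (F j - G j)
          + essSupNormOn A (G i - G j) := by
        grw [essSupNormOn_add_le, essSupNormOn_sub_le]
        gcongr
        exact essSupNormOn_mono_set _ inter_subset_left
    _ ≤ δ / 3 + δ / 3 + δ / 3 := add_le_add (add_le_add (hdiff i) (hdiff j)) hij
    _ = δ := ENNReal.add_thirds δ

theorem setOf_lt_maximalFunction_eq_iUnion {α : Type*} (F : ι → α → E) (c : ℝ≥0∞) :
    {x | c < maximalFunction F x} =
      ⋃ t : Finset ι × ℕ, {x | ∃ i ∈ t.1, c + (t.2 : ℝ≥0∞)⁻¹ < ‖F i x‖ₑ} := by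
  ext x
  simp only [maximalFunction, mem_ofPred_eq, lt_iSup_iff, mem_iUnion]
  constructor
  · rintro ⟨i, hi⟩
    obtain ⟨m, hm⟩ := ENNReal.exists_inv_nat_lt (tsub_pos_of_lt hi).ne'
    exact ⟨({i}, m), i, Finset.mem_singleton_self i, lt_tsub_iff_left.1 hm⟩
  · rintro ⟨t, i, -, hi⟩
    exact ⟨i, le_self_add.trans_lt hi⟩

theorem directed_setOf_exists_add_inv_lt_enorm {α : Type*} (F : ι → α → E) (c : ℝ≥0∞) :
    Directed (· ⊆ ·) fun t : Finset ι × ℕ =>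
      {x | ∃ i ∈ t.1, c + (t.2 : ℝ≥0∞)⁻¹ < ‖F i x‖ₑ} := by
  classical
  refine Monotone.directed_le fun s t hst x => ?_
  rintro ⟨i, his, hi⟩
  refine ⟨i, hst.1 his, lt_of_le_of_lt ?_ hi⟩
  gcongr
  exact hst.2

theorem measure_lt_maximalFunction_le_of_tendstoInMeasure [Countable ι] {X : Type*} {l : Filter X}
    {F : X → ι → Ω → E} {G : ι → Ω → E}
    (hFG : ∀ i, TendstoInMeasure μ (fun a => F a i) l (G i)) {c ε : ℝ≥0∞}
    (hF : ∃ᶠ a in l, μ {x | c < maximalFunction (F a) x} ≤ ε) :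
    μ {x | c < maximalFunction G x} ≤ ε := by
  rw [setOf_lt_maximalFunction_eq_iUnion,
    (directed_setOf_exists_add_inv_lt_enorm G c).measure_iUnion]
  refine iSup_le fun ⟨s, m⟩ => ?_
  let D (a : X) (i : ι) : Set Ω := {x | (m : ℝ≥0∞)⁻¹ ≤ edist (F a i x) (G i x)}
  have hsub (a : X) : {x | ∃ i ∈ s, c + (m : ℝ≥0∞)⁻¹ < ‖G i x‖ₑ} ⊆
      {x | c < maximalFunction (F a) x} ∪ ⋃ i ∈ s, D a i := by
    rintro x ⟨i, his, hi⟩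
    by_contra hx
    simp only [D, mem_union, mem_ofPred_eq, mem_iUnion, not_or, not_lt, not_exists, not_le] at hx
    have hFc : ‖F a i x‖ₑ ≤ c := (le_iSup (fun i => ‖F a i x‖ₑ) i).trans hx.1
    refine hi.not_ge ?_
    calc ‖G i x‖ₑ = ‖F a i x - (F a i x - G i x)‖ₑ := by rw [sub_sub_self]
      _ ≤ ‖F a i x‖ₑ + edist (F a i x) (G i x) := by
        rw [edist_eq_enorm_sub]; exact enorm_sub_le
      _ ≤ c + (m : ℝ≥0∞)⁻¹ := add_le_add hFc (hx.2 i his).le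
  have hlim : Tendsto (fun a => ε + ∑ i ∈ s, μ (D a i)) l (𝓝 ε) := by
    simpa only [Finset.sum_const_zero, add_zero] using tendsto_const_nhds.add
      (tendsto_finsetSum s fun i _ => hFG i _ (ENNReal.inv_pos.2 (ENNReal.natCast_ne_top m)))
  refine ge_of_tendsto_of_frequently hlim (hF.mono fun a ha => ?_)
  exact (measure_mono (hsub a)).trans <|
    (measure_union_le _ _).trans (add_le_add ha (measure_biUnion_finset_le _ _))

theorem AlmostUniformly.exists_nat_measure_lt_maximalFunction_le [Countable ι]
    {F : ι → Ω →ₘ[μ] E} (h : AlmostUniformly μ fun A => ⨆ i, essSupNormOn A (F i) < ∞)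
    {ε : ℝ≥0∞} (hε : ε ≠ 0) : ∃ N : ℕ, μ {x | N < maximalFunction (fun i => ⇑(F i)) x} ≤ ε := by
  obtain ⟨A, -, hμA, hA⟩ := h.exists_measure_compl_le hε
  obtain ⟨N, hN⟩ := ENNReal.exists_nat_gt hA.ne
  refine ⟨N, (measure_mono_ae ?_).trans hμA⟩
  filter_upwards [ae_all_iff.2 fun i => ae_enorm_le_essSupNormOn A (F i)] with x hx hNx hxA
  exact hNx.not_ge <| iSup_le fun i =>
    (hx i hxA).trans ((le_iSup (fun i => essSupNormOn A (F i)) i).trans hN.le)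

theorem ae_mul_maximalFunction_le [NormedSpace ℝ E] [Countable ι] (F G : ι → Ω →ₘ[μ] E) (k : ℕ) :
    ∀ᵐ x ∂μ, k * maximalFunction (fun i => ⇑(G i)) x ≤
      maximalFunction (fun i => ⇑(F i + k • G i)) x + maximalFunction (fun i => ⇑(F i)) x := by
  filter_upwards [ae_all_iff.2 fun i => AEEqFun.coeFn_add (F i) (k • G i),
    ae_all_iff.2 fun i => AEEqFun.coeFn_smul k (G i)] with x hadd hsmul
  simp only [maximalFunction]
  rw [ENNReal.mul_iSup]
  refine iSup_le fun i => ?_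
  calc (k : ℝ≥0∞) * ‖G i x‖ₑ = ‖k • G i x‖ₑ := by
        rw [← Nat.cast_smul_eq_nsmul ℝ, enorm_smul, Real.enorm_natCast]
    _ = ‖(F i + k • G i) x - F i x‖ₑ := by
        rw [hadd i, Pi.add_apply, hsmul i, Pi.smul_apply, add_sub_cancel_left]
    _ ≤ ‖(F i + k • G i) x‖ₑ + ‖F i x‖ₑ := enorm_sub_le
    _ ≤ _ := add_le_add (le_iSup (fun i => ‖(F i + k • G i) x‖ₑ) i)
        (le_iSup (fun i => ‖F i x‖ₑ) i)

theorem measure_lt_maximalFunction_le_add [NormedSpace ℝ E] [Countable ι] (F G : ι → Ω →ₘ[μ] E)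
    {k : ℕ} {c δ : ℝ≥0∞} (hk : 2 * c < k * δ) :
    μ {x | δ < maximalFunction (fun i => ⇑(G i)) x} ≤
      μ {x | c < maximalFunction (fun i => ⇑(F i + k • G i)) x} +
        μ {x | c < maximalFunction (fun i => ⇑(F i)) x} := by
  refine (measure_mono_ae ?_).trans (measure_union_le _ _)
  filter_upwards [ae_mul_maximalFunction_le F G k] with x hx (hδ : δ < _)
  by_contra! hc
  obtain ⟨hFG, hF⟩ := not_or.1 hc
  refine hk.not_ge ?_
  calc k * δ ≤ k * maximalFunction (fun i => ⇑(G i)) x := by gcongr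
    _ ≤ c + c := hx.trans (add_le_add (not_lt.1 hFG) (not_lt.1 hF))
    _ = 2 * c := (two_mul c).symm

end MaximalFunction

section BanachPrinciple

variable {μ : Measure Ω} {E : Type*} [NormedAddCommGroup E] {ι : Type*} [Countable ι]
  {X : Type*} [TopologicalSpace X]

theorem isClosed_setOf_measure_lt_maximalFunction_le {T : ι → X → Ω →ₘ[μ] E}
    (hcont : ∀ i f₀, TendstoInMeasure μ (fun f => ⇑(T i f)) (𝓝 f₀) (T i f₀)) (c ε : ℝ≥0∞) :
    IsClosed {f | μ {x | c < maximalFunction (fun i => ⇑(T i f)) x} ≤ ε} :=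
  isClosed_of_closure_subset fun f₀ hf₀ =>
    measure_lt_maximalFunction_le_of_tendstoInMeasure (fun i => hcont i f₀)
      (mem_closure_iff_frequently.1 hf₀)

theorem exists_eventually_measure_lt_maximalFunction_le [BaireSpace X] [Nonempty X]
    {T : ι → X → Ω →ₘ[μ] E}
    (hcont : ∀ i f₀, TendstoInMeasure μ (fun f => ⇑(T i f)) (𝓝 f₀) (T i f₀))
    (hmax : ∀ f, AlmostUniformly μ fun A => ⨆ i, essSupNormOn A (T i f) < ∞)
    {ε : ℝ≥0∞} (hε : ε ≠ 0) :
    ∃ (f₀ : X) (N : ℕ), ∀ᶠ f in 𝓝 f₀, μ {x | N < maximalFunction (fun i => ⇑(T i f)) x} ≤ ε := by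
  obtain ⟨N, f₀, hf₀⟩ := nonempty_interior_of_iUnion_of_closed
    (fun N : ℕ => isClosed_setOf_measure_lt_maximalFunction_le hcont N ε)
    (eq_univ_of_forall fun f =>
      mem_iUnion.2 ((hmax f).exists_nat_measure_lt_maximalFunction_le hε))
  exact ⟨f₀, N, mem_interior_iff_mem_nhds.1 hf₀⟩

theorem tendsto_measure_lt_maximalFunction_nhds_zero [NormedSpace ℝ E] [AddMonoid X]
    [ContinuousAdd X] [BaireSpace X] {M : ι → X →+ (Ω →ₘ[μ] E)}
    (hcont : ∀ i f₀, TendstoInMeasure μ (fun f => ⇑(M i f)) (𝓝 f₀) (M i f₀))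
    (hmax : ∀ f, AlmostUniformly μ fun A => ⨆ i, essSupNormOn A (M i f) < ∞)
    {δ : ℝ≥0∞} (hδ : δ ≠ 0) :
    Tendsto (fun g => μ {x | δ < maximalFunction (fun i => ⇑(M i g)) x}) (𝓝 0) (𝓝 0) := by
  refine ENNReal.tendsto_nhds_zero.2 fun ε hε => ?_
  obtain ⟨f₀, N, hN⟩ := exists_eventually_measure_lt_maximalFunction_le
    (T := fun i => ⇑(M i)) hcont hmax (ENNReal.half_pos hε.ne').ne'
  obtain ⟨k, hk⟩ : ∃ k : ℕ, 2 * (N : ℝ≥0∞) < k * δ :=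
    ENNReal.exists_nat_mul_gt hδ (by finiteness)
  have htranslate : Tendsto (fun g : X => f₀ + k • g) (𝓝 0) (𝓝 f₀) := by
    have hc : Continuous fun g : X => f₀ + k • g := by fun_prop
    simpa only [nsmul_zero, add_zero] using hc.tendsto 0
  filter_upwards [htranslate.eventually hN] with g hg
  simp only [map_add, map_nsmul] at hg
  calc _ ≤ _ := measure_lt_maximalFunction_le_add (fun i => M i f₀) (fun i => M i g) hk
    _ ≤ ε / 2 + ε / 2 := add_le_add hg hN.self_of_nhds
    _ = ε := ENNReal.add_halves ε

theorem isClosed_setOf_auCauchy [NormedSpace ℝ E] [AddGroup X] [IsTopologicalAddGroup X]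
    [BaireSpace X] (l : Filter ι) {M : ι → X →+ (Ω →ₘ[μ] E)}
    (hcont : ∀ i f₀, TendstoInMeasure μ (fun f => ⇑(M i f)) (𝓝 f₀) (M i f₀))
    (hmax : ∀ f, AlmostUniformly μ fun A => ⨆ i, essSupNormOn A (M i f) < ∞) :
    IsClosed {f | AuCauchy μ l fun i => M i f} := by
  refine isClosed_of_closure_subset fun f hf => ?_
  change AuCauchy μ l fun i => M i f
  refine AuCauchy.of_forall_exists_measure_lt_maximalFunction_sub_le fun ε hε δ hδ => ?_
  have hdiff : Tendsto (fun u => f - u) (𝓝 f) (𝓝 0) := by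
    have hc : Continuous fun u => f - u := by fun_prop
    simpa only [sub_self] using hc.tendsto f
  have hsmall := (tendsto_measure_lt_maximalFunction_nhds_zero hcont hmax hδ).comp hdiff
  obtain ⟨u, hu, hfu⟩ := ((mem_closure_iff_frequently.1 hf).and_eventually
    (ENNReal.tendsto_nhds_zero.1 hsmall ε hε.bot_lt)).exists
  simp only [Function.comp_apply, map_sub] at hfu
  exact ⟨fun i => M i u, hu, hfu⟩

end BanachPrinciple

theorem tendstoInMeasure_of_seq {μ : Measure Ω} {E : Type*} [EDist E] {X : Type*} {l : Filter X}
    [l.IsCountablyGenerated] {F : X → Ω → E} {g : Ω → E}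
    (h : ∀ u : ℕ → X, Tendsto u atTop l → TendstoInMeasure μ (fun k => F (u k)) atTop g) :
    TendstoInMeasure μ F l g :=
  fun ε hε => tendsto_of_seq_tendsto fun u hu => h u hu ε hε

theorem au_convergence_set_closed_Lp_general {X : Type*} [AddGroup X] [TopologicalSpace X]
    [IsTopologicalAddGroup X] [BaireSpace X] (μ : Measure Ω) {ι : Type*} [Countable ι]
    {l : Filter ι} [l.NeBot] [l.IsCountablyGenerated] (M : ι → X →+ (Ω →ₘ[μ] ℝ))
    (hcont : ∀ i f₀, TendstoInMeasure μ (fun f => ⇑(M i f)) (𝓝 f₀) (M i f₀))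
    (hmax : ∀ f, ∀ ε : ℝ, 0 < ε →
      ∃ A : Set Ω, MeasurableSet A ∧ μ Aᶜ ≤ ENNReal.ofReal ε ∧
        ⨆ i, eLpNorm (A.indicator ⇑(M i f)) ⊤ μ < ∞) :
    IsClosed {f | ∃ g : Ω →ₘ[μ] ℝ, AuTendsto μ l (fun i => M i f) g} := by
  have hiff (f : X) : (∃ g, AuTendsto μ l (fun i => M i f) g) ↔ AuCauchy μ l fun i => M i f :=
    ⟨fun ⟨_, hg⟩ => hg.auCauchy, AuCauchy.exists_auTendsto⟩
  simpa only [hiff] using isClosed_setOf_auCauchy l hcont hmax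

/-- **Commutative case of Theorem 3.6**: let `1 ≤ p < ∞` and let
`M_n : L^p(μ) → L⁰(μ)` be a sequence of positive continuous linear maps such that for
every `f ∈ L^p(μ)` and `ε > 0` there is a measurable set `E` with `μ(Ω∖E) ≤ ε` and
`sup_n ‖M_n(f)·1_E‖_∞ < ∞`.  Then the set of `f` for which `(M_n(f))` converges
almost uniformly is closed in `L^p(μ)`. -/
theorem au_convergence_set_closed_Lp (μ : Measure Ω) [SigmaFinite μ]
    (p : ℝ≥0∞) [Fact (1 ≤ p)] (hp2 : p ≠ ∞)
    (M : ℕ → (Lp ℝ p μ) →ₗ[ℝ] (Ω →ₘ[μ] ℝ))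
    (hpos : ∀ n : ℕ, ∀ f : Lp ℝ p μ, 0 ≤ f → 0 ≤ M n f)
    (hcont : ∀ n : ℕ, ∀ (f : ℕ → Lp ℝ p μ) (f₀ : Lp ℝ p μ), Tendsto f atTop (𝓝 f₀) →
      TendstoInMeasure μ (fun k => ⇑(M n (f k))) atTop ⇑(M n f₀))
    (hmax : ∀ f : Lp ℝ p μ, ∀ ε : ℝ, 0 < ε →
      ∃ E : Set Ω, MeasurableSet E ∧ μ Eᶜ ≤ ENNReal.ofReal ε ∧
        (⨆ n : ℕ, eLpNorm (E.indicator ⇑(M n f)) ⊤ μ) < ∞) :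
    IsClosed {f : Lp ℝ p μ | ∃ g : Ω →ₘ[μ] ℝ, AuTendsto μ atTop (fun n => M n f) g} :=
  au_convergence_set_closed_Lp_general μ (fun n => (M n).toAddMonoidHom)
    (fun n f₀ => tendstoInMeasure_of_seq fun f hf => hcont n f f₀ hf) hmax
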